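/- arXiv:2105.11105 — 4 statements merged into one kernel-verified Lean document; each statement's English description precedes it below -/
import Mathlib

section
/- Let N, m, m₀, σ₀ be positive integers and let σ be an integer such that N = p·q with p and q prime, gcd(m, N) = 1, 1 ≤ σ ≤ m, gcd(σ, m) = 1, σ₀ ≤ p < (1 + 1/m₀)·σ₀ (as real numbers), and p ≡ σ (mod m). Then there exist integers a, b, not both zero, such that: (i) |a·N/σ₀| ≤ 2·(N·m·m₀)^{1/2} and |b·σ₀ − a·N/σ₀| ≤ 2·(N·m/m₀)^{1/2} as real numbers; (ii) |a·q + b·p − (a·N/σ₀ + b·σ₀)| ≤ 4·N^{1/2}·m^{1/2}/m₀^{3/2} as real numbers; and (iii) a·q + b·p ≡ a·N·σ' + b·σ (mod m²) for any integer σ' with σ·σ' ≡ 1 (mod m²). -/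
/-!
The proof rests on one factorization: whenever `σ` is inverted by `σ'`,
`a * q + b * p - (a * (p * q) * σ' + b * σ) = (p - σ) * (b - a * q * σ')`.
Over `ℝ`, with `σ₀` in place of `σ`, the first factor is small because `σ₀` approximates `p`, and
the second is small once the point `(a * N / σ₀, b * σ₀ - a * N / σ₀)` lies in a small box. Modulo
`m ^ 2`, the first factor is divisible by `m`, and so is the second once `b * σ ≡ a * q` modulo `m`.
The pairs satisfying this congruence are mapped to those points as a planar lattice of covolume
`N * m`, which is exactly the product of the half-sides `√(N * m * m₀)` and `√(N * m / m₀)` of the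
box, so a nonzero lattice point lies in it.
-/

/-- For a triangular pair, Minkowski's linear forms theorem reduces to Dirichlet approximation of
`v / w`. -/
theorem exists_int_int_abs_triangular_le (u v w : ℝ) {A B : ℝ} (hB : 0 < B)
    (hdet : |u * w| ≤ A * B) :
    ∃ a d : ℤ, ¬ (a = 0 ∧ d = 0) ∧ |a * u| ≤ A ∧ |a * v + d * w| ≤ B := by
  rcases le_or_gt |w| B with hwB | hBw
  · have hA : 0 ≤ A := nonneg_of_mul_nonneg_left ((abs_nonneg _).trans hdet) hB
    exact ⟨0, 1, by simp, by simpa using hA, by simpa using hwB⟩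
  have hw : w ≠ 0 := abs_pos.mp (hB.trans hBw)
  set n := ⌊|w| / B⌋₊
  have hn : 0 < n := Nat.floor_pos.mpr ((one_le_div hB).mpr hBw.le)
  have hn_le : (n : ℝ) ≤ |w| / B := Nat.floor_le (by positivity)
  have hlt_n : |w| / B < n + 1 := Nat.lt_floor_add_one _
  obtain ⟨j, k, hk, hkn, hjk⟩ := Real.exists_int_int_abs_mul_sub_le (v / w) hn
  refine ⟨k, -j, fun h => hk.ne' h.1, ?_, ?_⟩
  · have hkn' : (k : ℝ) ≤ n := mod_cast hkn
    have hk' : (0 : ℝ) ≤ k := mod_cast hk.le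
    calc |k * u| = k * |u| := by rw [abs_mul, abs_of_nonneg hk']
      _ ≤ |w| / B * |u| := by gcongr; exact hkn'.trans hn_le
      _ = |u * w| / B := by rw [abs_mul]; ring
      _ ≤ A := (div_le_iff₀ hB).mpr hdet
  · calc |k * v + (-j : ℤ) * w| = |(k * (v / w) - j) * w| := by
          congr 1
          push_cast
          field_simp
          ring
      _ = |k * (v / w) - j| * |w| := abs_mul _ _
      _ ≤ 1 / (n + 1) * |w| := by gcongr
      _ ≤ B := by
          rw [one_div_mul_eq_div, div_le_comm₀ (by positivity) hB]
          exact hlt_n.le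

theorem exists_modEq_abs_triangular_le {m σ : ℤ} (hm : m ≠ 0) (hσ : IsCoprime σ m) (c : ℤ)
    (u v w : ℝ) {A B : ℝ} (hB : 0 < B) (hdet : |u * (m * w)| ≤ A * B) :
    ∃ a b : ℤ, ¬ (a = 0 ∧ b = 0) ∧ b * σ ≡ a * c [ZMOD m] ∧
      |a * u| ≤ A ∧ |a * v + b * w| ≤ B := by
  obtain ⟨s, r, hsr⟩ := hσ
  obtain ⟨a, d, hne, hA, hB'⟩ := exists_int_int_abs_triangular_le u (c * s * w + v) (m * w) hB hdet
  refine ⟨a, a * c * s + d * m, ?_, ?_, hA, ?_⟩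
  · rintro ⟨rfl, hb⟩
    exact hne ⟨rfl, by simpa [hm] using hb⟩
  · refine Int.modEq_of_dvd ⟨a * c * r - d * σ, ?_⟩
    linear_combination (-(a * c)) * hsr
  · convert hB' using 2
    push_cast
    ring

theorem modEq_sq_of_mul_modEq_one {m p σ σ' b c : ℤ} (hp : p ≡ σ [ZMOD m])
    (hσ' : σ * σ' ≡ 1 [ZMOD m ^ 2]) (hb : b * σ ≡ c [ZMOD m]) :
    c + b * p ≡ c * p * σ' + b * σ [ZMOD m ^ 2] := by
  have hσ'm : σ * σ' ≡ 1 [ZMOD m] := hσ'.of_dvd (dvd_pow_self m two_ne_zero)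
  have hbc : b ≡ c * σ' [ZMOD m] := by
    calc b = b * 1 := (mul_one b).symm
      _ ≡ b * (σ * σ') [ZMOD m] := hσ'm.symm.mul_left b
      _ = b * σ * σ' := (mul_assoc b σ σ').symm
      _ ≡ c * σ' [ZMOD m] := hb.mul_right σ'
  have hprod : m ^ 2 ∣ (σ - p) * (c * σ' - b) := by
    rw [sq]
    exact mul_dvd_mul hp.dvd hbc.dvd
  have hinv : m ^ 2 ∣ c * (1 - σ * σ') := hσ'.dvd.mul_left c
  refine Int.modEq_of_dvd ?_
  rw [show c * p * σ' + b * σ - (c + b * p) = -((σ - p) * (c * σ' - b) + c * (1 - σ * σ')) by ring]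
  exact (hprod.add hinv).neg_right

theorem abs_add_mul_sub_add_mul_le {𝕜 : Type*} [Field 𝕜] [LinearOrder 𝕜]
    [IsStrictOrderedRing 𝕜] {p s ε b c A B : 𝕜} (hs : 0 < s) (hsp : s ≤ p)
    (hps : p ≤ (1 + ε) * s) (hA : |c * p / s| ≤ A) (hB : |b * s - c * p / s| ≤ B) :
    |c + b * p - (c * p / s + b * s)| ≤ ε * (B + A * ε) := by
  have hp : 0 < p := hs.trans_le hsp
  have hsub : 0 ≤ p - s := sub_nonneg.mpr hsp
  have hε : (p - s) / s ≤ ε := by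
    rw [div_le_iff₀ hs]
    linarith
  have hε' : (p - s) / p ≤ ε := (div_le_div_of_nonneg_left hsub hs hsp).trans hε
  have hfactor : c + b * p - (c * p / s + b * s) =
      (p - s) / s * (b * s - c * p / s + c * p / s * ((p - s) / p)) := by
    field_simp
    ring
  have hA0 : 0 ≤ A := (abs_nonneg _).trans hA
  have hsecond : |b * s - c * p / s + c * p / s * ((p - s) / p)| ≤ B + A * ε :=
    calc _ ≤ |b * s - c * p / s| + |c * p / s * ((p - s) / p)| := abs_add_le _ _
      _ = |b * s - c * p / s| + |c * p / s| * ((p - s) / p) := by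
          rw [abs_mul (c * p / s), abs_of_nonneg (div_nonneg hsub hp.le)]
      _ ≤ B + A * ε := by gcongr
  have hε0 : 0 ≤ ε := (div_nonneg hsub hs.le).trans hε
  rw [hfactor, abs_mul, abs_of_nonneg (div_nonneg hsub hs.le)]
  gcongr

theorem sqrt_mul_eq_mul_sqrt_div (x : ℝ) {c : ℝ} (hc : 0 < c) : √(x * c) = c * √(x / c) := by
  rw [show x * c = c ^ 2 * (x / c) by field_simp, Real.sqrt_mul (sq_nonneg c), Real.sqrt_sq hc.le]

theorem sqrt_mul_mul_sqrt_div {x c : ℝ} (hx : 0 ≤ x) (hc : 0 < c) : √(x * c) * √(x / c) = x := by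
  rw [sqrt_mul_eq_mul_sqrt_div x hc, mul_assoc, Real.mul_self_sqrt (by positivity),
    mul_div_cancel₀ x hc.ne']

theorem sqrt_div_div_eq_div_rpow (x : ℝ) {c : ℝ} (hc : 0 < c) :
    √(x / c) / c = √x / c ^ ((3 : ℝ) / 2) := by
  rw [show (3 : ℝ) / 2 = 1 / 2 + 1 by norm_num, Real.rpow_add_one hc.ne', ← Real.sqrt_eq_rpow,
    Real.sqrt_div' x hc.le, div_div]

theorem stmt_0_general {N m p q : ℕ} {m₀ σ₀ : ℝ} {σ : ℤ} (hN : 0 < N) (hm : 0 < m)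
    (hm₀ : 0 < m₀) (hσ₀ : 0 < σ₀) (hNpq : N = p * q) (hσ : IsCoprime σ (m : ℤ))
    (hlow : σ₀ ≤ p) (hhigh : p ≤ (1 + 1 / m₀) * σ₀) (hp : p ≡ σ [ZMOD m]) :
    ∃ a b : ℤ, ¬ (a = 0 ∧ b = 0) ∧
      |a * N / σ₀| ≤ √(N * m * m₀) ∧
      |b * σ₀ - a * N / σ₀| ≤ √(N * m / m₀) ∧
      |a * q + b * p - (a * N / σ₀ + b * σ₀)| ≤ 2 * √N * √m / m₀ ^ ((3 : ℝ) / 2) ∧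
      ∀ σ' : ℤ, σ * σ' ≡ 1 [ZMOD m ^ 2] → a * q + b * p ≡ a * N * σ' + b * σ [ZMOD m ^ 2] := by
  have hdet : |N / σ₀ * ((m : ℤ) * σ₀)| ≤ √(N * m * m₀) * √(N * m / m₀) := by
    rw [sqrt_mul_mul_sqrt_div (by positivity) hm₀, Int.cast_natCast, abs_of_nonneg (by positivity)]
    exact le_of_eq (by field_simp)
  obtain ⟨a, b, hne, hcong, hx, hy⟩ := exists_modEq_abs_triangular_le (mod_cast hm.ne') hσ q
    (N / σ₀) (-(N / σ₀)) σ₀ (by positivity : 0 < √(N * m / m₀)) hdet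
  replace hx : |a * N / σ₀| ≤ √(N * m * m₀) := by rwa [mul_div_assoc]
  replace hy : |b * σ₀ - a * N / σ₀| ≤ √(N * m / m₀) := by
    rwa [show b * σ₀ - a * N / σ₀ = a * -(N / σ₀) + b * σ₀ by ring]
  have haN : (a * N : ℝ) = a * q * p := by
    rw [hNpq]
    push_cast
    ring
  refine ⟨a, b, hne, hx, hy, ?_, fun σ' hσ' => ?_⟩
  · rw [haN] at hx hy ⊢
    calc _ ≤ 1 / m₀ * (√(N * m / m₀) + √(N * m * m₀) * (1 / m₀)) :=
          abs_add_mul_sub_add_mul_le hσ₀ hlow hhigh hx hy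
      _ = 2 * (√(N * m / m₀) / m₀) := by
          rw [sqrt_mul_eq_mul_sqrt_div _ hm₀]
          field_simp
          norm_num
      _ = 2 * √N * √m / m₀ ^ ((3 : ℝ) / 2) := by
          rw [sqrt_div_div_eq_div_rpow _ hm₀, Real.sqrt_mul N.cast_nonneg]
          ring
  · rw [show (a * N : ℤ) = a * q * p by rw [hNpq]; push_cast; ring]
    exact modEq_sq_of_mul_modEq_one hp hσ' hcong

/-- Proposition 3.2 (existence content): computation of suitable pairs (a, b). -/
theorem stmt_0
    (N m m₀ σ₀ p q : ℕ) (σ : ℤ)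
    (hN : 0 < N) (hm : 0 < m) (hm₀ : 0 < m₀) (hσ₀ : 0 < σ₀)
    (hNpq : N = p * q) (hp : p.Prime) (hq : q.Prime)
    (hgcd : Nat.gcd m N = 1)
    (hσ1 : 1 ≤ σ) (hσm : σ ≤ (m : ℤ))
    (hσcop : IsCoprime σ (m : ℤ))
    (hlow : (σ₀ : ℝ) ≤ (p : ℝ))
    (hhigh : (p : ℝ) < (1 + 1 / (m₀ : ℝ)) * (σ₀ : ℝ))
    (hcong : Int.ModEq (m : ℤ) (p : ℤ) σ) :
    ∃ a b : ℤ, ¬ (a = 0 ∧ b = 0) ∧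
      |(a : ℝ) * N / σ₀| ≤ 2 * Real.sqrt ((N : ℝ) * m * m₀) ∧
      |(b : ℝ) * σ₀ - (a : ℝ) * N / σ₀| ≤ 2 * Real.sqrt ((N : ℝ) * m / m₀) ∧
      |(a : ℝ) * q + (b : ℝ) * p - ((a : ℝ) * N / σ₀ + (b : ℝ) * σ₀)|
        ≤ 4 * Real.sqrt N * Real.sqrt m / (m₀ : ℝ) ^ ((3 : ℝ) / 2) ∧
      ∀ σ' : ℤ, Int.ModEq ((m : ℤ) ^ 2) (σ * σ') 1 →
        Int.ModEq ((m : ℤ) ^ 2) (a * q + b * p) (a * N * σ' + b * σ) := by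
  obtain ⟨a, b, hne, hx, hy, herr, hmod⟩ := stmt_0_general hN hm (Nat.cast_pos.mpr hm₀)
    (Nat.cast_pos.mpr hσ₀) hNpq hσcop hlow hhigh.le hcong
  exact ⟨a, b, hne, hx.trans (le_mul_of_one_le_left (by positivity) one_le_two),
    hy.trans (le_mul_of_one_le_left (by positivity) one_le_two),
    herr.trans (by gcongr; norm_num), hmod⟩
end

section
/- Let N, m₀, σ₀, p, q be positive integers with N = p·q and σ₀ ≤ p < (1 + 1/m₀)·σ₀ (as real numbers). Then for all real numbers a and b, |a·q + b·p − (a·N/σ₀ + b·σ₀)| ≤ (1/m₀)·|b·σ₀ − a·N/σ₀| + (1/m₀²)·|a|·N/σ₀. -/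
/-!
Let `t = p / σ - 1` be the relative error made in replacing `p` by `σ` and, correspondingly, `q` by
`p * q / σ`. The resulting error in `a * q + b * p` is a polynomial in `t` with no constant term,
namely `t * (b * σ - a * (p * q) / σ) + t ^ 2 * (a * q)`; expanding around `p * q / σ` rather than
around `q` makes this exact, where a power series for `1 / (1 + t)` would leave a remainder.
The bound follows from the triangle inequality, `0 ≤ t ≤ u` and `q ≤ p * q / σ`.
-/

theorem linear_form_sub_eq_relative_error_expansion {K : Type*} [Field K] {σ : K} (hσ : σ ≠ 0)
    (p q a b : K) :
    a * q + b * p - (a * (p * q) / σ + b * σ) =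
      (p / σ - 1) * (b * σ - a * (p * q) / σ) + (p / σ - 1) ^ 2 * (a * q) := by
  field_simp
  ring

section LinearOrderedField

variable {K : Type*} [Field K] [LinearOrder K] [IsStrictOrderedRing K] {σ p u : K}

theorem abs_linear_form_sub_le_of_relative_error_le (hσ : σ ≠ 0) (hu : |p / σ - 1| ≤ u)
    (q a b : K) :
    |a * q + b * p - (a * (p * q) / σ + b * σ)| ≤
      u * |b * σ - a * (p * q) / σ| + u ^ 2 * |a * q| := by
  rw [linear_form_sub_eq_relative_error_expansion hσ]
  calc
    _ ≤ |(p / σ - 1) * (b * σ - a * (p * q) / σ)| + |(p / σ - 1) ^ 2 * (a * q)| := abs_add_le _ _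
    _ = |p / σ - 1| * |b * σ - a * (p * q) / σ| + |p / σ - 1| ^ 2 * |a * q| := by
      rw [abs_mul, abs_mul, abs_pow]
    _ ≤ _ := by gcongr

theorem stmt_2_general {q N : K} (hσ : 0 < σ) (hq : 0 ≤ q) (hN : N = p * q)
    (hlow : σ ≤ p) (hhigh : p ≤ (1 + u) * σ) (a b : K) :
    |a * q + b * p - (a * N / σ + b * σ)| ≤
      u * |b * σ - a * N / σ| + u ^ 2 * |a| * N / σ := by
  subst hN
  have one_le_ratio : 1 ≤ p / σ := (one_le_div hσ).2 hlow
  have ratio_le : p / σ ≤ 1 + u := (div_le_iff₀ hσ).2 hhigh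
  have relative_error_le : |p / σ - 1| ≤ u := by
    rw [abs_of_nonneg (sub_nonneg.2 one_le_ratio)]
    exact sub_le_iff_le_add'.2 ratio_le
  have q_le : q ≤ p / σ * q := le_mul_of_one_le_left hq one_le_ratio
  calc
    _ ≤ u * |b * σ - a * (p * q) / σ| + u ^ 2 * |a * q| :=
      abs_linear_form_sub_le_of_relative_error_le hσ.ne' relative_error_le q a b
    _ = u * |b * σ - a * (p * q) / σ| + u ^ 2 * |a| * q := by
      rw [abs_mul, abs_of_nonneg hq, mul_assoc]
    _ ≤ u * |b * σ - a * (p * q) / σ| + u ^ 2 * |a| * (p / σ * q) := by gcongr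
    _ = _ := by ring

end LinearOrderedField

/-- The approximation step in the proof of Proposition 3.2. -/
theorem stmt_2
    (N m₀ σ₀ p q : ℕ)
    (hN : 0 < N) (hm₀ : 0 < m₀) (hσ₀ : 0 < σ₀) (hp : 0 < p) (hq : 0 < q)
    (hNpq : N = p * q)
    (hlow : (σ₀ : ℝ) ≤ (p : ℝ))
    (hhigh : (p : ℝ) < (1 + 1 / (m₀ : ℝ)) * (σ₀ : ℝ)) :
    ∀ a b : ℝ,
      |a * q + b * p - (a * N / σ₀ + b * σ₀)|
        ≤ (1 / (m₀ : ℝ)) * |b * σ₀ - a * N / σ₀| + (1 / (m₀ : ℝ) ^ 2) * |a| * N / σ₀ := by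
  intro a b
  rw [← one_div_pow]
  exact stmt_2_general (mod_cast hσ₀) q.cast_nonneg (mod_cast hNpq) hlow hhigh.le a b
end

section
/- Let m be a positive integer and let p, q, σ, σ', a, b be integers such that gcd(p·q, m) = 1, p ≡ σ (mod m), σ·σ' ≡ 1 (mod m²), and a·(p·q) ≡ b·σ² (mod m). Then a·q + b·p ≡ a·(p·q)·σ' + b·σ (mod m²). -/
/-!
Let `I` be the ideal generated by `m`. Modulo `I ^ 2`, the difference of the two sides is
`(p - σ) * (b - a * q * σ')`, since `a * q ≡ a * q * (σ * σ')`. The first factor lies in `I` by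
hypothesis; so does the second, because `b * σ ^ 2 ≡ a * p * q ≡ a * q * σ` modulo `I` and `σ` is
invertible there.
-/

section CommRing

variable {R : Type*} [CommRing R] {I J : Ideal R}

lemma mul_add_mul_smodEq_mul_add_mul {x y u v : R}
    (hxy : x ≡ y [SMOD I]) (huv : u ≡ v [SMOD J]) :
    x * u + y * v ≡ x * v + y * u [SMOD I * J] := by
  have hprod : (x - y) * (u - v) ∈ I * J :=
    Ideal.mul_mem_mul (SModEq.sub_mem.mp hxy) (SModEq.sub_mem.mp huv)
  rw [SModEq.sub_mem]
  convert hprod using 1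
  ring

lemma smodEq_mul_of_mul_smodEq {u v x y : R}
    (huv : u * v ≡ 1 [SMOD I]) (h : x * u ≡ y [SMOD I]) : x ≡ y * v [SMOD I] :=
  calc
    x = x * 1 := (mul_one x).symm
    _ ≡ x * (u * v) [SMOD I] := SModEq.rfl.mul huv.symm
    _ = x * u * v := (mul_assoc x u v).symm
    _ ≡ y * v [SMOD I] := h.mul SModEq.rfl

lemma smodEq_mul_of_mul_smodEq_mul_sq {u v x y : R}
    (huv : u * v ≡ 1 [SMOD I]) (h : x * u ≡ y * u ^ 2 [SMOD I]) : y ≡ x * v [SMOD I] := by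
  have hyu : y * u ≡ x * u * v [SMOD I] :=
    smodEq_mul_of_mul_smodEq huv <| by simpa only [sq, mul_assoc] using h.symm
  refine smodEq_mul_of_mul_smodEq huv ?_
  calc
    y * u ≡ x * u * v [SMOD I] := hyu
    _ = x * (u * v) := mul_assoc x u v
    _ ≡ x * 1 [SMOD I] := SModEq.rfl.mul huv
    _ = x := mul_one x

theorem stmt_3_general {p q σ σ' a b : R} (hpσ : p ≡ σ [SMOD I])
    (hσσ' : σ * σ' ≡ 1 [SMOD I ^ 2]) (hab : a * (p * q) ≡ b * σ ^ 2 [SMOD I]) :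
    a * q + b * p ≡ a * (p * q) * σ' + b * σ [SMOD I ^ 2] := by
  have haqσ : a * q * σ ≡ b * σ ^ 2 [SMOD I] :=
    calc
      a * q * σ ≡ a * q * p [SMOD I] := SModEq.rfl.mul hpσ.symm
      _ = a * (p * q) := by ring
      _ ≡ b * σ ^ 2 [SMOD I] := hab
  have hb : b ≡ a * q * σ' [SMOD I] :=
    smodEq_mul_of_mul_smodEq_mul_sq (hσσ'.mono (Ideal.pow_le_self two_ne_zero)) haqσ
  have hexchange : p * b + σ * (a * q * σ') ≡ p * (a * q * σ') + σ * b [SMOD I ^ 2] :=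
    sq I ▸ mul_add_mul_smodEq_mul_add_mul hpσ hb
  calc
    a * q + b * p = a * q * 1 + b * p := by rw [mul_one]
    _ ≡ a * q * (σ * σ') + b * p [SMOD I ^ 2] := (SModEq.rfl.mul hσσ'.symm).add SModEq.rfl
    _ = p * b + σ * (a * q * σ') := by ring
    _ ≡ p * (a * q * σ') + σ * b [SMOD I ^ 2] := hexchange
    _ = a * (p * q) * σ' + b * σ := by ring

end CommRing

lemma int_modEq_iff_smodEq_span_singleton {n x y : ℤ} :
    x ≡ y [ZMOD n] ↔ x ≡ y [SMOD Ideal.span {n}] := by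
  rw [Int.modEq_comm, Int.modEq_iff_dvd, SModEq.sub_mem, Ideal.mem_span_singleton]

/-- The key congruence step in the proof of Proposition 3.2. -/
theorem stmt_3
    (m : ℕ) (hm : 0 < m)
    (p q σ σ' a b : ℤ)
    (hcop : IsCoprime (p * q) (m : ℤ))
    (hpσ : Int.ModEq (m : ℤ) p σ)
    (hσσ' : Int.ModEq ((m : ℤ) ^ 2) (σ * σ') 1)
    (hab : Int.ModEq (m : ℤ) (a * (p * q)) (b * σ ^ 2)) :
    Int.ModEq ((m : ℤ) ^ 2) (a * q + b * p) (a * (p * q) * σ' + b * σ) := by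
  simp only [int_modEq_iff_smodEq_span_singleton, ← Ideal.span_singleton_pow] at hpσ hσσ' hab ⊢
  exact stmt_3_general hpσ hσσ' hab
end

section
/- Let m₀ be a positive integer and define a sequence s : ℕ → ℕ by s(0) = 1 and s(k+1) = ⌈(1 + 1/m₀)·s(k)⌉ for all k ≥ 0, where the ceiling is of the real number (1 + 1/m₀)·s(k). Then for every positive integer p there exists exactly one index k ≥ 0 such that s(k) ≤ p and p < (1 + 1/m₀)·s(k) as real numbers. -/
/-! With `c = 1 + 1 / m₀`, a natural number `p` satisfies `p < c * s k` iff `p < ⌈c * s k⌉₊`, so the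
condition on `k` says that `p` lies in `[s k, s (k + 1))`. As `c > 1`, the sequence `s` is strictly
increasing, hence unbounded, so these consecutive intervals partition `[s 0, ∞)`. -/

open Set Order in
theorem existsUnique_mem_Ico_succ_of_monotone {ι α : Type*} [LinearOrder ι] [OrderBot ι]
    [SuccOrder ι] [IsSuccArchimedean ι] [LinearOrder α] {f : ι → α} (hf : Monotone f)
    (hunbdd : ¬BddAbove (range f)) {a : α} (ha : f ⊥ ≤ a) :
    ∃! i, a ∈ Ico (f i) (f (succ i)) := by
  have hcover : a ∈ ⋃ i, Ico (f i) (f (succ i)) := by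
    rwa [iUnion_Ico_map_succ_eq_Ici (fun _ => hf bot_le) hunbdd]
  obtain ⟨i, hi⟩ := mem_iUnion.mp hcover
  exact ⟨i, hi, fun j hj => hf.pairwise_disjoint_on_Ico_succ.eq (not_disjoint_iff.mpr ⟨a, hj, hi⟩)⟩

section CeilMul

variable {R : Type*} [Semiring R] [LinearOrder R] [IsStrictOrderedRing R] [FloorSemiring R]
  {c : R} {s : ℕ → ℕ}

theorem lt_ceil_mul_of_one_lt (hc : 1 < c) {n : ℕ} (hn : 0 < n) : n < ⌈c * (n : R)⌉₊ :=
  Nat.lt_ceil.mpr (lt_mul_of_one_lt_left (Nat.cast_pos.mpr hn) hc)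

theorem strictMono_of_succ_eq_ceil_mul (hc : 1 < c) (hs0 : 0 < s 0)
    (hs : ∀ k, s (k + 1) = ⌈c * (s k : R)⌉₊) : StrictMono s := by
  have lt_succ_of_pos {k : ℕ} (hk : 0 < s k) : s k < s (k + 1) :=
    (lt_ceil_mul_of_one_lt hc hk).trans_eq (hs k).symm
  have pos (k : ℕ) : 0 < s k := by
    induction k with
    | zero => exact hs0
    | succ k ih => exact ih.trans (lt_succ_of_pos ih)
  exact strictMono_nat_of_lt_succ fun k => lt_succ_of_pos (pos k)

theorem stmt_11_general (hc : 1 < c) (hs0 : 0 < s 0)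
    (hs : ∀ k, s (k + 1) = ⌈c * (s k : R)⌉₊) {p : ℕ} (hp : s 0 ≤ p) :
    ∃! k : ℕ, s k ≤ p ∧ (p : R) < c * (s k : R) := by
  have hmono : StrictMono s := strictMono_of_succ_eq_ceil_mul hc hs0 hs
  have hunique : ∃! k, p ∈ Set.Ico (s k) (s (k + 1)) :=
    existsUnique_mem_Ico_succ_of_monotone hmono.monotone
      hmono.not_bddAbove_range_of_wellFoundedLT hp
  simpa only [Set.mem_Ico, hs, Nat.lt_ceil] using hunique

end CeilMul

/-- The intervals `[s k, (1 + 1/m₀)·s k)` are disjoint and cover the positive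
integers. -/
theorem stmt_11
    (m₀ : ℕ) (hm₀ : 0 < m₀)
    (s : ℕ → ℕ) (hs0 : s 0 = 1)
    (hs : ∀ k, s (k + 1) = ⌈(1 + 1 / (m₀ : ℝ)) * (s k : ℝ)⌉₊) :
    ∀ p : ℕ, 0 < p →
      ∃! k : ℕ, s k ≤ p ∧ (p : ℝ) < (1 + 1 / (m₀ : ℝ)) * (s k : ℝ) := by
  have hc : 1 < 1 + 1 / (m₀ : ℝ) := lt_add_of_pos_right 1 (by positivity)
  exact fun p hp => stmt_11_general hc (hs0 ▸ one_pos) hs (hs0.trans_le hp)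
end
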